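/- Let τ ∈ ℝ_{<0}. The function γ_τ(z) has an analytic continuation to the cut plane ℂ \ { (−∞, −1+τ^{-1}] ∪ [1−τ^{-1}, ∞) }, again denoted γ_τ(z), and with r = max(1, −τ^{-1}) the following asymptotics hold: for every ε > 0, | ∓γ_τ(z) + πτz²/8 − (π/24)(τ + τ^{-1}) | = O( exp( (ε − π/r)·|Im(z)| ) ) as Im(z) → ±∞, uniformly for Re(z) in compact subsets of ℝ. -/

import Mathlib

noncomputable section

open Complex MeasureTheory Set

/-- The integrand of Ruijsenaars' hyperbolic gamma function. -/
def hypInt (τ : ℝ) (z : ℂ) (y : ℝ) : ℂ :=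
  (z / (y : ℂ) -
      Complex.sinh ((τ : ℂ) * (y : ℂ) * z) /
        (Complex.sinh (y : ℂ) * Complex.sinh ((τ : ℂ) * (y : ℂ)))) / (y : ℂ)

/-- `γ_τ(z) = (1/(2i))·∫_0^∞ ( z/y − sinh(τyz)/(sinh(y)·sinh(τy)) ) dy/y`. -/
def hypGammaArg (τ : ℝ) (z : ℂ) : ℂ :=
  (2 * Complex.I)⁻¹ * ∫ y in Set.Ioi (0 : ℝ), hypInt τ z y

/-- The cut plane `ℂ \ { (−∞, −1+τ⁻¹] ∪ [1−τ⁻¹, ∞) }`. -/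
def hypCutPlane (τ : ℝ) : Set ℂ :=
  {z : ℂ | ¬ (z.im = 0 ∧ (z.re ≤ -1 + τ⁻¹ ∨ 1 - τ⁻¹ ≤ z.re))}

open Filter Topology
open scoped Real Interval

/-!
Let `t = -τ` and `K(y) = exp(tyz) / (y sinh(y) sinh(ty))`. The integrand of `γ_τ` is `z / y²` minus
the even part of `K`, so `γ_τ(z)` is `i/4` times the integral over `ℝ` of `K` minus its principal
part at `0`. Moving the line of integration to `Im y = a`, below the first pole of `K` on the
positive imaginary axis, turns this into `(i/4) ∫ K` plus a quadratic polynomial in `z`, which is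
`-π/4` times the residue of `K` at `0`. Once the line is bent into the parabola `y = x + i(a + x²)`,
the integral converges for all `z` with `Im z > 0` and is `O(exp(-t a Im z))`; as `a` tends to the
first pole, `t a` tends to `π / max(1, t⁻¹)`. The lower half-plane follows since `γ_τ` is odd.
-/

/-! ### Contour shifts through primitives on convex sets -/

lemma integral_comp_mul_deriv_eq_sub_of_hasDerivWithinAt {S : Set ℂ} {f F : ℂ → ℂ}
    {γ γ' : ℝ → ℂ} {a b : ℝ} (hF : ∀ y ∈ S, HasDerivWithinAt F (f y) S y)
    (hf : ContinuousOn f S) (hγ : ∀ x, HasDerivAt γ (γ' x) x) (hγ' : Continuous γ')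
    (hS : MapsTo γ [[a, b]] S) :
    ∫ x in a..b, f (γ x) * γ' x = F (γ b) - F (γ a) := by
  have hγc : ContinuousOn γ [[a, b]] := fun x _ ↦ (hγ x).continuousAt.continuousWithinAt
  have hderiv : ∀ x ∈ [[a, b]], HasDerivWithinAt (F ∘ γ) (f (γ x) * γ' x) [[a, b]] x :=
    fun x hx ↦ (hF _ (hS hx)).comp x (hγ x).hasDerivWithinAt hS
  refine intervalIntegral.integral_eq_sub_of_hasDeriv_right
    (fun x hx ↦ (hderiv x hx).continuousWithinAt) (fun x hx ↦ ?_)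
    ((hf.comp hγc hS).mul hγ'.continuousOn).intervalIntegrable
  exact ((hderiv x (Ioo_subset_Icc_self hx)).hasDerivAt
    (Icc_mem_nhds hx.1 hx.2)).hasDerivWithinAt

/-- The contour integral `∫ f(y) dy` along the segment from `v` to `w`. -/
def integralSegment (f : ℂ → ℂ) (v w : ℂ) : ℂ :=
  ∫ θ in (0 : ℝ)..1, f (AffineMap.lineMap (k := ℝ) v w θ) * (w - v)

lemma norm_integralSegment_le {f : ℂ → ℂ} {v w : ℂ} {C : ℝ}
    (h : ∀ y ∈ segment ℝ v w, ‖f y‖ * ‖w - v‖ ≤ C) : ‖integralSegment f v w‖ ≤ C := by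
  rw [integralSegment]
  refine (intervalIntegral.norm_integral_le_of_norm_le_const (C := C) fun θ hθ ↦ ?_).trans
    (by simp)
  rw [uIoc_of_le zero_le_one] at hθ
  rw [norm_mul]
  exact h _ (segment_eq_image_lineMap ℝ v w ▸ mem_image_of_mem _ (Ioc_subset_Icc_self hθ))

lemma integral_sub_integral_eq_of_convex {S : Set ℂ} (hS : Convex ℝ S) {f : ℂ → ℂ}
    (hf : DifferentiableOn ℂ f S) {γ₀ γ₁ γ₀' γ₁' : ℝ → ℂ} {a b : ℝ}
    (hγ₀ : ∀ x, HasDerivAt γ₀ (γ₀' x) x) (hγ₀' : Continuous γ₀') (hS₀ : MapsTo γ₀ [[a, b]] S)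
    (hγ₁ : ∀ x, HasDerivAt γ₁ (γ₁' x) x) (hγ₁' : Continuous γ₁') (hS₁ : MapsTo γ₁ [[a, b]] S) :
    (∫ x in a..b, f (γ₁ x) * γ₁' x) - ∫ x in a..b, f (γ₀ x) * γ₀' x =
      integralSegment f (γ₀ b) (γ₁ b) - integralSegment f (γ₀ a) (γ₁ a) := by
  obtain ⟨F, hF⟩ := hS.exists_forall_hasDerivWithinAt hf
  have hFγ {γ γ' : ℝ → ℂ} {a b : ℝ} := integral_comp_mul_deriv_eq_sub_of_hasDerivWithinAt
    (γ := γ) (γ' := γ') (a := a) (b := b) hF hf.continuousOn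
  have increment {c : ℝ} (hc : c ∈ [[a, b]]) :
      integralSegment f (γ₀ c) (γ₁ c) = F (γ₁ c) - F (γ₀ c) := by
    have hmaps : MapsTo (AffineMap.lineMap (k := ℝ) (γ₀ c) (γ₁ c)) [[0, 1]] S := by
      rw [uIcc_of_le zero_le_one, mapsTo_iff_image_subset, ← segment_eq_image_lineMap]
      exact hS.segment_subset (hS₀ hc) (hS₁ hc)
    simpa [integralSegment] using hFγ (fun _ ↦ AffineMap.hasDerivAt_lineMap) continuous_const hmaps
  rw [hFγ hγ₁ hγ₁' hS₁, hFγ hγ₀ hγ₀' hS₀, increment right_mem_uIcc, increment left_mem_uIcc]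
  ring

/-- The parabola `x ↦ x + i(a + s x²)`; for `s = 0` it is the horizontal line `Im y = a`. -/
def hypContour (a s x : ℝ) : ℂ := x + (a + s * x ^ 2) * I

section Contour

variable {a s x : ℝ}

@[simp] lemma hypContour_re : (hypContour a s x).re = x := by
  simp [hypContour, ← ofReal_pow]

@[simp] lemma hypContour_im : (hypContour a s x).im = a + s * x ^ 2 := by
  simp [hypContour, ← ofReal_pow]

@[simp] lemma hypContour_horizontal (a x : ℝ) : hypContour a 0 x = x + a * I := by
  simp [hypContour]

@[fun_prop] lemma continuous_hypContour (a s : ℝ) : Continuous (hypContour a s) := by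
  unfold hypContour; fun_prop

lemma hasDerivAt_hypContour (a s x : ℝ) :
    HasDerivAt (hypContour a s) (1 + 2 * s * x * I) x := by
  have hx : HasDerivAt (fun u : ℝ ↦ (u : ℂ)) 1 x := ofRealCLM.hasDerivAt
  refine (hx.add ((((hx.pow 2).const_mul (s : ℂ)).const_add (a : ℂ)).mul_const I)).congr_deriv ?_
  norm_num
  ring

end Contour

lemma convex_halfPlane_union_vertical (σ : ℝ) {T : Set ℝ} (hT : Convex ℝ T) :
    Convex ℝ {y : ℂ | 0 < σ * y.re ∨ y.re = 0 ∧ y.im ∈ T} := by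
  rw [convex_iff_forall_pos]
  intro v hv w hw p q hp hq hpq
  have hre : σ * (p • v + q • w).re = p * (σ * v.re) + q * (σ * w.re) := by simp; ring
  simp only [mem_ofPred_eq, hre]
  rcases hv with hv | ⟨hv, hvT⟩ <;> rcases hw with hw | ⟨hw, hwT⟩
  · left; positivity
  · left; rw [hw]; simp only [mul_zero, add_zero]; positivity
  · left; rw [hv]; simp only [mul_zero, zero_add]; positivity
  · right
    refine ⟨by simp [hv, hw], ?_⟩
    simpa using hT hvT hwT hp.le hq.le hpq

section Shift

variable {T : Set ℝ} {f : ℂ → ℂ} {a b : ℝ}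

lemma hypContour_mem_of_mem {c : ℝ} (hc : c ∈ T) (v x : ℝ) :
    (hypContour c v x).re ≠ 0 ∨ (hypContour c v x).im ∈ T := by
  rcases eq_or_ne x 0 with rfl | hx
  · simp [hc]
  · simp [hx]

lemma integral_hypContour_sub_of_zero (hT : Convex ℝ T)
    (hf : DifferentiableOn ℂ f {y | y.re ≠ 0 ∨ y.im ∈ T}) (ha : a ∈ T) (hb : b ∈ T) (s u X : ℝ) :
    (∫ x in 0..X, f (hypContour b u x) * (1 + 2 * u * x * I)) -
        ∫ x in 0..X, f (hypContour a s x) * (1 + 2 * s * x * I) =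
      integralSegment f (hypContour a s X) (hypContour b u X) -
        integralSegment f (hypContour a s 0) (hypContour b u 0) := by
  have hmaps {c : ℝ} (hc : c ∈ T) (v : ℝ) : MapsTo (hypContour c v) [[0, X]]
      {y : ℂ | 0 < X * y.re ∨ y.re = 0 ∧ y.im ∈ T} := by
    intro x hx
    rcases eq_or_ne x 0 with rfl | hx0
    · simp [hc]
    · have hx2 : 0 < x * x := mul_self_pos.2 hx0
      left
      rw [hypContour_re]
      rcases mem_uIcc.1 hx with h | h <;> nlinarith
  exact integral_sub_integral_eq_of_convex (convex_halfPlane_union_vertical X hT)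
    (hf.mono fun y hy ↦ hy.imp (fun h ↦ right_ne_zero_of_mul h.ne') And.right)
    (hasDerivAt_hypContour a s) (by fun_prop) (hmaps ha s)
    (hasDerivAt_hypContour b u) (by fun_prop) (hmaps hb u)

/-- A contour crossing the imaginary axis inside `T` can be moved as long as it keeps crossing
there: the domain `{re ≠ 0} ∪ iT` of `f` need not be convex, but each of its halves is. -/
lemma integral_hypContour_sub (hT : Convex ℝ T)
    (hf : DifferentiableOn ℂ f {y | y.re ≠ 0 ∨ y.im ∈ T}) (ha : a ∈ T) (hb : b ∈ T) (s u X : ℝ) :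
    (∫ x in -X..X, f (hypContour b u x) * (1 + 2 * u * x * I)) -
        ∫ x in -X..X, f (hypContour a s x) * (1 + 2 * s * x * I) =
      integralSegment f (hypContour a s X) (hypContour b u X) -
        integralSegment f (hypContour a s (-X)) (hypContour b u (-X)) := by
  have hint {c : ℝ} (hc : c ∈ T) (v r : ℝ) : IntervalIntegrable
      (fun x : ℝ ↦ f (hypContour c v x) * (1 + 2 * v * x * I)) volume 0 r :=
    Continuous.intervalIntegrable (.mul (hf.continuousOn.comp_continuous
      (continuous_hypContour c v) (hypContour_mem_of_mem hc v)) (by fun_prop)) 0 r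
  rw [← intervalIntegral.integral_interval_sub_left (hint hb u X) (hint hb u (-X)),
    ← intervalIntegral.integral_interval_sub_left (hint ha s X) (hint ha s (-X))]
  linear_combination integral_hypContour_sub_of_zero hT hf ha hb s u X -
    integral_hypContour_sub_of_zero hT hf ha hb s u (-X)

lemma tendsto_integral_hypContour_sub (hT : Convex ℝ T)
    (hf : DifferentiableOn ℂ f {y | y.re ≠ 0 ∨ y.im ∈ T}) (ha : a ∈ T) (hb : b ∈ T) {s u : ℝ}
    (hlim : ∀ ε > 0, ∀ᶠ x in cocompact ℝ, ∀ y ∈ segment ℝ (hypContour a s x) (hypContour b u x),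
      ‖f y‖ * ‖hypContour b u x - hypContour a s x‖ ≤ ε) :
    Tendsto (fun X : ℝ ↦ (∫ x in -X..X, f (hypContour b u x) * (1 + 2 * u * x * I)) -
      ∫ x in -X..X, f (hypContour a s x) * (1 + 2 * s * x * I)) atTop (𝓝 0) := by
  simp only [integral_hypContour_sub hT hf ha hb]
  have hV : Tendsto (fun x ↦ integralSegment f (hypContour a s x) (hypContour b u x))
      (cocompact ℝ) (𝓝 0) := by
    refine NormedAddGroup.tendsto_nhds_zero.2 fun ε hε ↦ ?_
    filter_upwards [hlim (ε / 2) (half_pos hε)] with x hx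
    exact (norm_integralSegment_le hx).trans_lt (half_lt_self hε)
  simpa using (hV.mono_left atTop_le_cocompact).sub
    ((hV.mono_left atBot_le_cocompact).comp tendsto_neg_atTop_atBot)

end Shift

lemma re_eq_and_im_mem_of_mem_segment_hypContour {a b s u x : ℝ} {y : ℂ}
    (hy : y ∈ segment ℝ (hypContour a s x) (hypContour b u x)) :
    y.re = x ∧ y.im ∈ [[a + s * x ^ 2, b + u * x ^ 2]] := by
  obtain ⟨p, q, hp, hq, hpq, rfl⟩ := hy
  refine ⟨by simp [← add_mul, hpq], segment_eq_uIcc (𝕜 := ℝ) _ _ ▸ ⟨p, q, hp, hq, hpq, by simp⟩⟩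

/-! ### Principal parts -/

section PrincipalPart

variable {a : ℝ}

lemma tendsto_hypContour_cobounded (a s : ℝ) {l : Filter ℝ} (hl : l ≤ cocompact ℝ) :
    Tendsto (hypContour a s) l (Bornology.cobounded ℂ) := by
  rw [← tendsto_norm_atTop_iff_cobounded]
  refine tendsto_atTop_mono (fun x ↦ ?_) ((tendsto_norm_cocompact_atTop (E := ℝ)).mono_left hl)
  simpa using abs_re_le_norm (hypContour a s x)

lemma tendsto_log_hypContour_sub_log (ha : 0 < a) :
    Tendsto (fun X : ℝ ↦ log (hypContour a 0 X) - log (hypContour a 0 (-X))) atTop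
      (𝓝 (-(π * I))) := by
  have hlog (σ : ℝ) (hσ : σ ≠ 0) : ∀ᶠ X : ℝ in atTop,
      log (hypContour a 0 (σ * X)) = Real.log X + log (hypContour (a / X) 0 σ) := by
    filter_upwards [eventually_gt_atTop 0] with X hX
    have hX0 : (X : ℂ) ≠ 0 := ofReal_ne_zero.2 hX.ne'
    have hne : hypContour (a / X) 0 σ ≠ 0 := fun h ↦ hσ (by simpa using congrArg re h)
    rw [← log_ofReal_mul hX hne]
    congr 1
    simp only [hypContour_horizontal, ofReal_mul, ofReal_div]
    field_simp
  have hlim (σ : ℝ) :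
      Tendsto (fun X : ℝ ↦ hypContour (a / X) 0 σ) atTop (𝓝[{w | 0 ≤ w.im}] (σ : ℂ)) := by
    refine tendsto_nhdsWithin_iff.2 ⟨?_, ?_⟩
    · have hdiv : Tendsto (fun X : ℝ ↦ ((a / X : ℝ) : ℂ)) atTop (𝓝 ((0 : ℝ) : ℂ)) :=
        (continuous_ofReal.tendsto 0).comp (tendsto_const_nhds.div_atTop tendsto_id)
      simpa using (hdiv.mul_const I).const_add (σ : ℂ)
    · filter_upwards [eventually_gt_atTop 0] with X hX
      simpa using (div_pos ha hX).le
  have hpos : Tendsto (fun X : ℝ ↦ log (hypContour (a / X) 0 1)) atTop (𝓝 0) := by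
    have h1 : ContinuousAt log ((1 : ℝ) : ℂ) := continuousAt_clog (by simp)
    simpa [Function.comp_def] using (h1.tendsto.comp ((hlim 1).mono_right nhdsWithin_le_nhds))
  have hneg : Tendsto (fun X : ℝ ↦ log (hypContour (a / X) 0 (-1))) atTop (𝓝 (π * I)) := by
    have := (tendsto_log_nhdsWithin_im_nonneg_of_re_neg_of_im_zero (z := ((-1 : ℝ) : ℂ))
      (by simp) (by simp)).comp (hlim (-1))
    simpa [Function.comp_def] using this
  rw [← zero_sub]
  refine (hpos.sub hneg).congr' ?_
  filter_upwards [hlog 1 one_ne_zero, hlog (-1) (by norm_num)] with X h1 h2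
  rw [one_mul] at h1
  rw [neg_one_mul] at h2
  rw [h1, h2, add_sub_add_left_eq_sub]

lemma hypContour_mem_slitPlane (ha : 0 < a) (x : ℝ) : hypContour a 0 x ∈ slitPlane :=
  .inr (by simp [ha.ne'])

lemma tendsto_integral_principalPart (ha : 0 < a) (p q r : ℂ) :
    Tendsto (fun X : ℝ ↦ ∫ x in -X..X, (p / hypContour a 0 x ^ 3 + q / hypContour a 0 x ^ 2 +
      r / hypContour a 0 x) * (1 + 2 * (0 : ℝ) * x * I)) atTop (𝓝 (-(π * I * r))) := by
  set P : ℂ → ℂ := fun y ↦ -(p / 2) * y⁻¹ ^ 2 - q * y⁻¹ with hP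
  have hderiv (y : ℂ) (hy : y ∈ slitPlane) :
      HasDerivWithinAt (fun y ↦ P y + r * log y) (p / y ^ 3 + q / y ^ 2 + r / y) slitPlane y := by
    have hy0 := slitPlane_ne_zero hy
    have hinv := hasDerivAt_inv hy0
    refine (((((hinv.pow 2).const_mul (-(p / 2))).sub (hinv.const_mul q)).add
      ((hasDerivAt_log hy).const_mul r)).congr_deriv ?_).hasDerivWithinAt
    simp only [Nat.cast_ofNat, Nat.add_one_sub_one, pow_one, mul_neg, neg_mul, neg_neg,
      sub_neg_eq_add]
    field_simp
  have hcont : ContinuousOn (fun y : ℂ ↦ p / y ^ 3 + q / y ^ 2 + r / y) slitPlane := by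
    have (y : ℂ) (hy : y ∈ slitPlane) := slitPlane_ne_zero hy
    fun_prop (disch := simpa using this)
  simp only [integral_comp_mul_deriv_eq_sub_of_hasDerivWithinAt hderiv hcont
    (hasDerivAt_hypContour a 0) (by fun_prop) (fun x _ ↦ hypContour_mem_slitPlane ha x)]
  have hPlim {l : Filter ℝ} (hl : l ≤ cocompact ℝ) :
      Tendsto (fun x ↦ P (hypContour a 0 x)) l (𝓝 0) := by
    have := tendsto_inv₀_cobounded.comp (tendsto_hypContour_cobounded a 0 hl)
    simpa [hP] using ((this.pow 2).const_mul (-(p / 2))).sub (this.const_mul q)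
  have hlim := ((hPlim atTop_le_cocompact).sub
    ((hPlim atBot_le_cocompact).comp tendsto_neg_atTop_atBot)).add
      ((tendsto_log_hypContour_sub_log ha).const_mul r)
  convert hlim using 2
  · simp only [Function.comp_apply]; ring
  · ring

end PrincipalPart

/-! ### The kernel -/

lemma abs_sinh_re_le_norm_sinh (y : ℂ) : |Real.sinh y.re| ≤ ‖sinh y‖ := by
  have h := abs_norm_sub_norm_le (exp y) (exp (-y))
  rw [norm_exp, norm_exp, neg_re] at h
  rw [Real.sinh_eq, Complex.sinh, norm_div, norm_ofNat, abs_div, abs_two]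
  gcongr

lemma exp_abs_div_four_le_abs_sinh {x : ℝ} (hx : 1 ≤ |x|) : Real.exp |x| / 4 ≤ |Real.sinh x| := by
  have hle : Real.exp (-|x|) ≤ 1 / 2 := by
    rw [Real.exp_neg, inv_le_comm₀ (Real.exp_pos _) (by norm_num)]
    linarith [Real.add_one_le_exp |x|]
  rw [Real.abs_sinh, Real.sinh_eq]
  linarith [Real.add_one_le_exp |x|]

lemma sinh_ne_zero_of_re_ne_zero_or {y : ℂ} (h : y.re ≠ 0 ∨ y.im ∈ Ioo 0 π) : sinh y ≠ 0 := by
  rcases eq_or_ne y.re 0 with hre | hre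
  · have him := h.resolve_left (not_not.2 hre)
    have hy : y = y.im * I := Complex.ext (by simp [hre]) (by simp)
    rw [hy, sinh_mul_I, ← ofReal_sin]
    exact mul_ne_zero (ofReal_ne_zero.2 (Real.sin_pos_of_mem_Ioo him).ne') I_ne_zero
  · intro h0
    have := abs_sinh_re_le_norm_sinh y
    rw [h0, norm_zero] at this
    exact hre (Real.sinh_eq_zero.1 (abs_nonpos_iff.1 this))

/-- The even part in `y` of `hypKernel t z y` is, up to sign and the term `z / y²`, the integrand
`hypInt t z y`. -/
def hypKernel (t : ℝ) (z y : ℂ) : ℂ := exp (t * y * z) / (y * sinh y * sinh (t * y))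

/-- The imaginary part of the first pole of `hypKernel t z` on the positive imaginary axis: the
poles there lie at `πik` and `πik / t`, `k ≥ 1`. -/
def hypFirstPole (t : ℝ) : ℝ := π / max 1 t

/-- A domain free of poles of `hypKernel t z`: off the imaginary axis, or on it between the origin
and the first pole. -/
def hypPoleFree (t : ℝ) : Set ℂ := {y | y.re ≠ 0 ∨ y.im ∈ Ioo 0 (hypFirstPole t)}

section Kernel

variable {t : ℝ}

lemma hypFirstPole_pos (t : ℝ) : 0 < hypFirstPole t := by
  unfold hypFirstPole; positivity

lemma hypFirstPole_le_pi (t : ℝ) : hypFirstPole t ≤ π :=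
  div_le_self Real.pi_pos.le (le_max_left 1 t)

lemma mul_hypFirstPole (ht : 0 < t) : t * hypFirstPole t = π / max 1 t⁻¹ := by
  have : max 1 t = t * max 1 t⁻¹ := by
    rw [mul_max_of_nonneg _ _ ht.le, mul_inv_cancel₀ ht.ne', mul_one, max_comm]
  rw [hypFirstPole, this]
  field_simp

lemma mul_hypFirstPole_le_pi (ht : 0 < t) : t * hypFirstPole t ≤ π := by
  rw [mul_hypFirstPole ht]
  exact div_le_self Real.pi_pos.le (le_max_left _ _)

lemma sinh_ne_zero_of_mem_hypPoleFree {y : ℂ} (hy : y ∈ hypPoleFree t) : sinh y ≠ 0 :=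
  sinh_ne_zero_of_re_ne_zero_or (hy.imp_right fun h ↦ ⟨h.1, h.2.trans_le (hypFirstPole_le_pi t)⟩)

lemma sinh_mul_ne_zero_of_mem_hypPoleFree (ht : 0 < t) {y : ℂ} (hy : y ∈ hypPoleFree t) :
    sinh (t * y) ≠ 0 := by
  refine sinh_ne_zero_of_re_ne_zero_or ?_
  rw [re_ofReal_mul, im_ofReal_mul]
  refine hy.imp (mul_ne_zero ht.ne') fun h ↦ ⟨mul_pos ht h.1, ?_⟩
  exact (mul_lt_mul_of_pos_left h.2 ht).trans_le (mul_hypFirstPole_le_pi ht)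

lemma ne_zero_of_mem_hypPoleFree {y : ℂ} (hy : y ∈ hypPoleFree t) : y ≠ 0 := by
  rintro rfl
  exact sinh_ne_zero_of_mem_hypPoleFree hy sinh_zero

lemma hypContour_mem_hypPoleFree {a : ℝ} (ha : a ∈ Ioo 0 (hypFirstPole t)) (s x : ℝ) :
    hypContour a s x ∈ hypPoleFree t :=
  hypContour_mem_of_mem ha s x

lemma differentiableAt_hypKernel (ht : 0 < t) (z : ℂ) {y : ℂ} (hy : y ∈ hypPoleFree t) :
    DifferentiableAt ℂ (hypKernel t z) y := by
  have hne : y * sinh y * sinh (t * y) ≠ 0 := mul_ne_zero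
    (mul_ne_zero (ne_zero_of_mem_hypPoleFree hy) (sinh_ne_zero_of_mem_hypPoleFree hy))
    (sinh_mul_ne_zero_of_mem_hypPoleFree ht hy)
  unfold hypKernel
  fun_prop (disch := exact hne)

lemma continuous_hypKernel_hypContour (ht : 0 < t) {a : ℝ} (ha : a ∈ Ioo 0 (hypFirstPole t)) (s : ℝ)
    (z : ℂ) : Continuous fun x ↦ hypKernel t z (hypContour a s x) :=
  continuous_iff_continuousAt.2 fun x ↦ (differentiableAt_hypKernel ht z
    (hypContour_mem_hypPoleFree ha s x)).continuousAt.comp (by fun_prop)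

lemma hypKernel_eq_exp_mul (t : ℝ) (z y : ℂ) :
    hypKernel t z y = exp (t * y * z) * hypKernel t 0 y := by
  simp only [hypKernel, mul_zero, exp_zero, div_eq_mul_inv, one_mul]

lemma norm_hypKernel (t : ℝ) (z y : ℂ) :
    ‖hypKernel t z y‖ = Real.exp (t * (y * z).re) * ‖hypKernel t 0 y‖ := by
  rw [hypKernel_eq_exp_mul, norm_mul, norm_exp, mul_assoc, re_ofReal_mul]

lemma norm_hypKernel_zero_le_of_le_abs_re (ht : 0 < t) {y : ℂ} (hy : 1 + t⁻¹ ≤ |y.re|) :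
    ‖hypKernel t 0 y‖ ≤ 16 * Real.exp (-(1 + t) * |y.re|) := by
  have ht' : 0 < t⁻¹ := inv_pos.2 ht
  have hnorm : 1 ≤ ‖y‖ := by linarith [abs_re_le_norm y]
  have hsinh : Real.exp |y.re| / 4 ≤ ‖sinh y‖ :=
    (exp_abs_div_four_le_abs_sinh (by linarith)).trans (abs_sinh_re_le_norm_sinh y)
  have hsinh' : Real.exp (t * |y.re|) / 4 ≤ ‖sinh (t * y)‖ := by
    have hre : |((t : ℂ) * y).re| = t * |y.re| := by rw [re_ofReal_mul, abs_mul, abs_of_pos ht]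
    rw [← hre]
    refine (exp_abs_div_four_le_abs_sinh ?_).trans (abs_sinh_re_le_norm_sinh _)
    rw [hre]
    exact (inv_le_iff_one_le_mul₀' ht).1 (by linarith)
  rw [hypKernel, mul_zero, exp_zero, one_div, norm_inv, norm_mul, norm_mul]
  calc (‖y‖ * ‖sinh y‖ * ‖sinh (t * y)‖)⁻¹
      ≤ (1 * (Real.exp |y.re| / 4) * (Real.exp (t * |y.re|) / 4))⁻¹ := by gcongr
    _ = 16 * Real.exp (-(1 + t) * |y.re|) := by
      rw [show -(1 + t) * |y.re| = -|y.re| + -(t * |y.re|) by ring, Real.exp_add, Real.exp_neg,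
        Real.exp_neg]
      field_simp
      norm_num

lemma norm_hypKernel_le_of_le_abs_re (ht : 0 < t) {z y : ℂ} (hy : 1 + t⁻¹ ≤ |y.re|) {B : ℝ}
    (hB : -(y.im * z.im) ≤ B) :
    ‖hypKernel t z y‖ ≤ 16 * Real.exp (t * B) * Real.exp (-(1 + t - t * |z.re|) * |y.re|) := by
  have hre : (y * z).re ≤ |y.re| * |z.re| + B := by
    rw [mul_re, ← abs_mul]
    linarith [le_abs_self (y.re * z.re)]
  calc ‖hypKernel t z y‖
      ≤ Real.exp (t * (|y.re| * |z.re| + B)) * (16 * Real.exp (-(1 + t) * |y.re|)) := by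
        rw [norm_hypKernel]
        gcongr
        exact norm_hypKernel_zero_le_of_le_abs_re ht hy
    _ = 16 * Real.exp (t * B) * Real.exp (-(1 + t - t * |z.re|) * |y.re|) := by
      rw [mul_left_comm, mul_assoc, ← Real.exp_add, ← Real.exp_add]
      ring_nf

lemma exists_norm_hypKernel_zero_hypContour_le (ht : 0 < t) {a : ℝ}
    (ha : a ∈ Ioo 0 (hypFirstPole t)) (s : ℝ) :
    ∃ C > 0, ∀ x, ‖hypKernel t 0 (hypContour a s x)‖ ≤ C * Real.exp (-(1 + t) * |x|) := by
  set g : ℝ → ℝ := fun x ↦ ‖hypKernel t 0 (hypContour a s x)‖ * Real.exp ((1 + t) * |x|)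
  have hg : Continuous g := by
    have := continuous_hypKernel_hypContour ht ha s 0
    fun_prop
  obtain ⟨C, hC⟩ := (isCompact_Icc (a := -(1 + t⁻¹)) (b := 1 + t⁻¹)).bddAbove_image hg.continuousOn
  refine ⟨max C 16, by positivity, fun x ↦ ?_⟩
  rcases le_total |x| (1 + t⁻¹) with hx | hx
  · have hgx : g x ≤ max C 16 := (hC (mem_image_of_mem g (abs_le.1 hx))).trans (le_max_left _ _)
    rwa [neg_mul, Real.exp_neg, ← div_eq_mul_inv, le_div_iff₀ (Real.exp_pos _)]
  · have := norm_hypKernel_zero_le_of_le_abs_re ht (y := hypContour a s x) (by simpa using hx)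
    rw [hypContour_re] at this
    exact this.trans (by gcongr; exact le_max_right _ _)

end Kernel

lemma exists_differentiable_eq_taylor_add {f : ℂ → ℂ} (hf : Differentiable ℂ f) (n : ℕ) :
    ∃ R : ℂ → ℂ, Differentiable ℂ R ∧ ∀ w,
      f w = ∑ k ∈ Finset.range n, iteratedDeriv k f 0 / k.factorial * w ^ k + w ^ n * R w := by
  set R : ℕ → ℂ → ℂ := fun k ↦ (Function.swap dslope 0)^[k] f with hR
  have hRsucc (k : ℕ) : R (k + 1) = dslope (R k) 0 := Function.iterate_succ_apply' _ k f
  have hRd (k : ℕ) : Differentiable ℂ (R k) := by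
    induction k with
    | zero => exact hf
    | succ k ih =>
      rw [hRsucc, ← differentiableOn_univ, differentiableOn_dslope univ_mem]
      exact ih.differentiableOn
  have hR0 (k : ℕ) : (Function.swap dslope 0)^[k] f 0 = iteratedDeriv k f 0 / k.factorial := by
    have := (hf.analyticAt 0).hasFPowerSeriesAt.has_fpower_series_iterate_dslope_fslope k
    rw [← this.coeff_zero 1, ← FormalMultilinearSeries.coeff,
      FormalMultilinearSeries.coeff_iterate_fslope, zero_add,
      FormalMultilinearSeries.coeff_ofScalars]
  refine ⟨R n, hRd n, fun w ↦ ?_⟩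
  induction n with
  | zero => simp [hR]
  | succ n ih =>
    have hstep : R n w = R n 0 + w * R (n + 1) w := by
      have := sub_smul_dslope (R n) 0 w
      rw [hRsucc]
      simp only [sub_zero, smul_eq_mul] at this
      linear_combination -this
    rw [ih, Finset.sum_range_succ, hstep, ← hR0, hR]
    ring

lemma exists_differentiable_exp_eq : ∃ E : ℂ → ℂ, Differentiable ℂ E ∧
    ∀ w, exp w = 1 + w + w ^ 2 / 2 + w ^ 3 * E w := by
  obtain ⟨E, hE, h⟩ := exists_differentiable_eq_taylor_add differentiable_exp 3
  refine ⟨E, hE, fun w ↦ (h w).trans ?_⟩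
  simp only [iteratedDeriv_eq_iterate, iter_deriv_exp, exp_zero, Finset.sum_range_succ,
    Finset.sum_range_zero, Nat.factorial, Nat.cast_one]
  push_cast
  ring

lemma exists_differentiable_sinh_eq : ∃ B : ℂ → ℂ, Differentiable ℂ B ∧
    ∀ w, sinh w = w * (1 + w ^ 2 / 6 + w ^ 3 * B w) := by
  obtain ⟨B, hB, h⟩ := exists_differentiable_eq_taylor_add differentiable_sinh 4
  refine ⟨B, hB, fun w ↦ (h w).trans ?_⟩
  simp only [Finset.sum_range_succ, Finset.sum_range_zero, iteratedDeriv_zero,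
    iteratedDeriv_succ', Complex.deriv_sinh, Complex.deriv_cosh, sinh_zero, cosh_zero,
    Nat.factorial]
  push_cast
  ring

/-- The coefficient of `1 / y` in the Laurent expansion of `hypKernel t z` at the origin. -/
def hypResidue (t : ℝ) (z : ℂ) : ℂ := t * z ^ 2 / 2 - (t + (t : ℂ)⁻¹) / 6

/-- The principal part of `hypKernel t z` at the origin. -/
def hypPrincipalPart (t : ℝ) (z y : ℂ) : ℂ := (t : ℂ)⁻¹ / y ^ 3 + z / y ^ 2 + hypResidue t z / y

/-- The Taylor expansion of order two of `t y³ hypKernel t z y`, written without denominators. -/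
lemma exists_exp_sub_eq_pow_mul {t : ℝ} (ht : t ≠ 0) (z : ℂ) {B : ℂ → ℂ}
    (hB : Differentiable ℂ B) : ∃ M : ℂ → ℂ, Differentiable ℂ M ∧ ∀ y,
      exp (t * y * z) - (1 + y ^ 2 / 6 + y ^ 3 * B y) *
        (1 + (t * y) ^ 2 / 6 + (t * y) ^ 3 * B (t * y)) *
          (1 + t * z * y + t * hypResidue t z * y ^ 2) = y ^ 3 * M y := by
  obtain ⟨E, hE, hexp⟩ := exists_differentiable_exp_eq
  have hresidue : t ^ 2 * z ^ 2 / 2 - (1 + t ^ 2) / 6 - t * hypResidue t z = 0 := by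
    have := ofReal_ne_zero.2 ht
    rw [hypResidue]
    field_simp
    ring
  refine ⟨fun y ↦ t ^ 3 * z ^ 3 * E (t * y * z) - (1 + t ^ 2) / 6 * (t * z + t * hypResidue t z * y)
    - (B y + t ^ 3 * B (t * y) + y * (1 / 6 + y * B y) * (t ^ 2 / 6 + t ^ 3 * y * B (t * y))) *
      (1 + t * z * y + t * hypResidue t z * y ^ 2), by fun_prop, fun y ↦ ?_⟩
  rw [hexp]
  linear_combination y ^ 2 * hresidue

lemma exists_differentiableOn_eq_hypKernel_sub {t : ℝ} (ht : 0 < t) (z : ℂ) :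
    ∃ W : ℂ → ℂ, DifferentiableOn ℂ W {y | y.re ≠ 0 ∨ y.im ∈ Ico 0 (hypFirstPole t)} ∧
      ∀ y ∈ hypPoleFree t, W y = hypKernel t z y - hypPrincipalPart t z y := by
  obtain ⟨B, hB, hsinh⟩ := exists_differentiable_sinh_eq
  obtain ⟨M, hM, hMeq⟩ := exists_exp_sub_eq_pow_mul ht.ne' z hB
  have htc : (t : ℂ) ≠ 0 := ofReal_ne_zero.2 ht.ne'
  set sh : ℂ → ℂ := fun y ↦ 1 + y ^ 2 / 6 + y ^ 3 * B y with hsh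
  have hsh' (y : ℂ) (hy : y ∈ hypPoleFree t) : sh y ≠ 0 ∧ sh (t * y) ≠ 0 := by
    have h1 := sinh_ne_zero_of_mem_hypPoleFree hy
    have h2 := sinh_mul_ne_zero_of_mem_hypPoleFree ht hy
    rw [hsinh] at h1 h2
    exact ⟨right_ne_zero_of_mul h1, right_ne_zero_of_mul h2⟩
  refine ⟨fun y ↦ M y / (t * sh y * sh (t * y)), fun y hy ↦ ?_, fun y hy ↦ ?_⟩
  · have hne : t * sh y * sh (t * y) ≠ 0 := by
      rcases eq_or_ne y 0 with rfl | hy0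
      · simp [hsh, htc]
      · have hmem : y ∈ hypPoleFree t := by
          refine or_iff_not_imp_left.2 fun hre ↦ ?_
          have him := hy.resolve_left hre
          exact ⟨him.1.lt_of_ne fun h ↦ hy0 (Complex.ext (not_not.1 hre) h.symm), him.2⟩
        exact mul_ne_zero (mul_ne_zero htc (hsh' y hmem).1) (hsh' y hmem).2
    have : Differentiable ℂ sh := by fun_prop
    exact ((hM y).div (by fun_prop) hne).differentiableWithinAt
  · have hy0 := ne_zero_of_mem_hypPoleFree hy
    obtain ⟨h1, h2⟩ := hsh' y hy
    have hM' : M y = (exp (t * y * z) - sh y * sh (t * y) *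
        (1 + t * z * y + t * hypResidue t z * y ^ 2)) / y ^ 3 := by
      rw [eq_div_iff (pow_ne_zero 3 hy0), hMeq y, mul_comm]
    rw [hypKernel, hypPrincipalPart, hsinh, hsinh (t * y)]
    change M y / _ = exp (t * y * z) / (y * (y * sh y) * (t * y * sh (t * y))) - _
    rw [hM']
    clear_value sh
    field_simp

/-! ### Contour integrals of the kernel -/

lemma integrable_exp_neg_mul_abs {η : ℝ} (hη : 0 < η) :
    Integrable fun x : ℝ ↦ Real.exp (-η * |x|) := by
  refine Integrable.of_integral_ne_zero ?_
  rw [integral_comp_abs (f := fun x ↦ Real.exp (-η * x)),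
    integral_exp_mul_Ioi (neg_lt_zero.2 hη)]
  simp [hη.ne']

lemma differentiableAt_integral_of_dominated {α E : Type*} [MeasurableSpace α] {μ : Measure α}
    [NormedAddCommGroup E] [NormedSpace ℂ E] {F : ℂ → α → E} {z₀ : ℂ} {δ : ℝ} (hδ : 0 < δ)
    {b : α → ℝ} (hb : Integrable b μ)
    (hF : ∀ z ∈ Metric.ball z₀ δ, AEStronglyMeasurable (F z) μ)
    (hF' : AEStronglyMeasurable (fun x ↦ deriv (F · x) z₀) μ)
    (hd : ∀ x, DifferentiableOn ℂ (F · x) (Metric.ball z₀ δ))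
    (hFb : ∀ z ∈ Metric.ball z₀ δ, ∀ x, ‖F z x‖ ≤ b x) :
    DifferentiableAt ℂ (fun z ↦ ∫ x, F z x ∂μ) z₀ := by
  have hz₀ := Metric.mem_ball_self (x := z₀) hδ
  have hsub {z : ℂ} (hz : z ∈ Metric.ball z₀ (δ / 2)) :
      Metric.closedBall z (δ / 2) ⊆ Metric.ball z₀ δ :=
    Metric.closedBall_subset_ball' (by linarith [Metric.mem_ball.1 hz])
  refine (hasDerivAt_integral_of_dominated_loc_of_deriv_le (F' := fun z x ↦ deriv (F · x) z)
    (bound := fun x ↦ b x / (δ / 2)) (Metric.ball_mem_nhds z₀ (half_pos hδ)) ?_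
    (hb.mono' (hF z₀ hz₀) (.of_forall (hFb z₀ hz₀)))
    hF' (.of_forall fun x z hz ↦ ?_) (hb.div_const _)
    (.of_forall fun x z hz ↦ ?_)).2.differentiableAt
  · filter_upwards [Metric.ball_mem_nhds z₀ hδ] with z hz using hF z hz
  · -- Cauchy's estimate bounds the derivative by the same dominating function
    exact norm_deriv_le_of_forall_mem_sphere_norm_le (half_pos hδ)
      ((hd x).mono (Metric.closure_ball_subset_closedBall.trans (hsub hz))).diffContOnCl
      fun w hw ↦ hFb w (hsub hz (Metric.sphere_subset_closedBall hw)) x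
  · exact ((hd x).differentiableAt (Metric.isOpen_ball.mem_nhds
      (Metric.ball_subset_ball (half_le_self hδ.le) hz))).hasDerivAt

/-- The integral `∫ hypKernel t z y dy` along the contour `y = hypContour a s x`, `x ∈ ℝ`. -/
def hypContourIntegral (t a s : ℝ) (z : ℂ) : ℂ :=
  ∫ x : ℝ, hypKernel t z (hypContour a s x) * (1 + 2 * s * x * I)

section ContourIntegral

variable {t a : ℝ}

lemma exists_norm_hypKernel_hypContour_le (ht : 0 < t) (ha : a ∈ Ioo 0 (hypFirstPole t)) (s : ℝ) :
    ∃ C > 0, ∀ x z, ‖hypKernel t z (hypContour a s x)‖ ≤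
      C * Real.exp (t * (x * z.re - (a + s * x ^ 2) * z.im) - (1 + t) * |x|) := by
  obtain ⟨C, hC, h⟩ := exists_norm_hypKernel_zero_hypContour_le ht ha s
  refine ⟨C, hC, fun x z ↦ ?_⟩
  rw [norm_hypKernel, mul_re, hypContour_re, hypContour_im, sub_eq_add_neg _ ((1 + t) * |x|),
    Real.exp_add, mul_left_comm, ← neg_mul]
  gcongr
  exact h x

lemma exists_norm_hypContour_zero_integrand_le (ht : 0 < t) (ha : a ∈ Ioo 0 (hypFirstPole t)) :
    ∃ C > 0, ∀ x z, ‖hypKernel t z (hypContour a 0 x) * (1 + 2 * (0 : ℝ) * x * I)‖ ≤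
      C * Real.exp (t * a * |z.im|) * Real.exp (-(1 + t - t * |z.re|) * |x|) := by
  obtain ⟨C, hC, h⟩ := exists_norm_hypKernel_hypContour_le ht ha 0
  refine ⟨C, hC, fun x z ↦ ?_⟩
  have hre : x * z.re ≤ |x| * |z.re| := (le_abs_self _).trans_eq (abs_mul _ _)
  have him : -(a * z.im) ≤ a * |z.im| := by
    rw [← mul_neg]
    exact mul_le_mul_of_nonneg_left (neg_le_abs _) ha.1.le
  have hexp := mul_le_mul_of_nonneg_left (add_le_add hre him) ht.le
  rw [ofReal_zero, mul_zero, zero_mul, zero_mul, add_zero, mul_one, mul_assoc, ← Real.exp_add]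
  refine (h x z).trans ?_
  gcongr
  linarith

lemma mul_sub_mul_sq_le {q : ℝ} (hq : 0 < q) (p x : ℝ) : p * x - q * x ^ 2 ≤ p ^ 2 / (4 * q) := by
  rw [le_div_iff₀ (by positivity)]
  linarith [sq_nonneg (2 * q * x - p)]

/-- The factor `exp (-t x² Im z)` coming from the parabola absorbs `exp (t x Re z)`, whatever
`Re z` is. -/
lemma exists_norm_hypContour_one_integrand_le (ht : 0 < t) (ha : a ∈ Ioo 0 (hypFirstPole t))
    {B v : ℝ} (hv : 0 < v) :
    ∃ C > 0, ∀ x z, |z.re| ≤ B → v ≤ z.im →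
      ‖hypKernel t z (hypContour a 1 x) * (1 + 2 * (1 : ℝ) * x * I)‖ ≤
        C * Real.exp (-(t * a * z.im)) * Real.exp (-1 * |x|) := by
  obtain ⟨C, hC, h⟩ := exists_norm_hypKernel_hypContour_le ht ha 1
  set m : ℝ := (2 + t * B) ^ 2 / (4 * (t * v))
  refine ⟨C * Real.exp m, by positivity, fun x z hre him ↦ ?_⟩
  have hweight : ‖(1 + 2 * (1 : ℝ) * x * I : ℂ)‖ ≤ Real.exp (2 * |x|) :=
    calc ‖(1 + 2 * (1 : ℝ) * x * I : ℂ)‖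
        ≤ ‖(1 : ℂ)‖ + ‖2 * ((1 : ℝ) : ℂ) * x * I‖ := norm_add_le _ _
      _ = 2 * |x| + 1 := by simp [add_comm]
      _ ≤ Real.exp (2 * |x|) := Real.add_one_le_exp _
  have hsquare : (2 + t * B) * |x| - t * v * x ^ 2 ≤ m :=
    sq_abs x ▸ mul_sub_mul_sq_le (mul_pos ht hv) _ _
  have hlin : t * (x * z.re) ≤ t * (|x| * B) := mul_le_mul_of_nonneg_left
    ((le_abs_self _).trans ((abs_mul _ _).trans_le (by gcongr))) ht.le
  have hquad : t * v * x ^ 2 ≤ t * z.im * x ^ 2 := by gcongr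
  have hx : 0 ≤ t * |x| := by positivity
  calc ‖hypKernel t z (hypContour a 1 x) * (1 + 2 * (1 : ℝ) * x * I)‖
      ≤ C * Real.exp (t * (x * z.re - (a + 1 * x ^ 2) * z.im) - (1 + t) * |x|) *
          Real.exp (2 * |x|) :=
        (norm_mul_le _ _).trans (mul_le_mul (h x z) hweight (norm_nonneg _) (by positivity))
    _ = C * Real.exp (t * (x * z.re - (a + 1 * x ^ 2) * z.im) - (1 + t) * |x| + 2 * |x|) := by
      rw [mul_assoc, ← Real.exp_add]
    _ ≤ C * Real.exp (m + -(t * a * z.im) + -1 * |x|) := by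
      refine mul_le_mul_of_nonneg_left (Real.exp_le_exp.2 ?_) hC.le
      linarith
    _ = C * Real.exp m * Real.exp (-(t * a * z.im)) * Real.exp (-1 * |x|) := by
      rw [Real.exp_add, Real.exp_add]
      ring

lemma continuous_hypContour_integrand (ht : 0 < t) (ha : a ∈ Ioo 0 (hypFirstPole t)) (s : ℝ)
    (z : ℂ) : Continuous fun x : ℝ ↦ hypKernel t z (hypContour a s x) * (1 + 2 * s * x * I) := by
  have := continuous_hypKernel_hypContour ht ha s z
  fun_prop

lemma integrable_hypContour_zero_integrand (ht : 0 < t) (ha : a ∈ Ioo 0 (hypFirstPole t)) {z : ℂ}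
    (hz : t * |z.re| < 1 + t) :
    Integrable fun x : ℝ ↦ hypKernel t z (hypContour a 0 x) * (1 + 2 * (0 : ℝ) * x * I) := by
  obtain ⟨C, -, h⟩ := exists_norm_hypContour_zero_integrand_le ht ha
  exact ((integrable_exp_neg_mul_abs (sub_pos.2 hz)).const_mul _).mono'
    (continuous_hypContour_integrand ht ha 0 z).aestronglyMeasurable (.of_forall fun x ↦ h x z)

lemma integrable_hypContour_one_integrand (ht : 0 < t) (ha : a ∈ Ioo 0 (hypFirstPole t)) {z : ℂ}
    (hz : 0 < z.im) :
    Integrable fun x : ℝ ↦ hypKernel t z (hypContour a 1 x) * (1 + 2 * (1 : ℝ) * x * I) := by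
  obtain ⟨C, -, h⟩ := exists_norm_hypContour_one_integrand_le (B := |z.re|) ht ha hz
  exact ((integrable_exp_neg_mul_abs one_pos).const_mul _).mono'
    (continuous_hypContour_integrand ht ha 1 z).aestronglyMeasurable
    (.of_forall fun x ↦ h x z le_rfl le_rfl)

lemma differentiableAt_hypContourIntegral_of_dominated (ht : 0 < t)
    (ha : a ∈ Ioo 0 (hypFirstPole t)) (s : ℝ) {z₀ : ℂ} {δ : ℝ} (hδ : 0 < δ) {b : ℝ → ℝ}
    (hb : Integrable b) (h : ∀ z ∈ Metric.ball z₀ δ, ∀ x,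
      ‖hypKernel t z (hypContour a s x) * (1 + 2 * s * x * I)‖ ≤ b x) :
    DifferentiableAt ℂ (hypContourIntegral t a s) z₀ := by
  have hderiv (x : ℝ) (z : ℂ) :
      HasDerivAt (fun z ↦ hypKernel t z (hypContour a s x) * (1 + 2 * s * x * I))
        (t * hypContour a s x * (hypKernel t z (hypContour a s x) * (1 + 2 * s * x * I))) z := by
    unfold hypKernel
    refine (((((hasDerivAt_id' z).const_mul (t * hypContour a s x)).cexp).div_const
      _).mul_const _).congr_deriv ?_
    ring
  refine differentiableAt_integral_of_dominated hδ hb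
    (fun z _ ↦ (continuous_hypContour_integrand ht ha s z).aestronglyMeasurable) ?_
    (fun x z _ ↦ (hderiv x z).differentiableAt.differentiableWithinAt) h
  simp only [(hderiv _ z₀).deriv]
  have := continuous_hypContour_integrand ht ha s z₀
  exact Continuous.aestronglyMeasurable (by fun_prop)

lemma abs_re_lt_and_abs_im_sub_lt_of_mem_ball {z w : ℂ} {δ : ℝ} (hw : w ∈ Metric.ball z δ) :
    |w.re| < |z.re| + δ ∧ |w.im - z.im| < δ := by
  rw [Metric.mem_ball, dist_eq_norm] at hw
  have hre := abs_re_le_norm (w - z)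
  have him := abs_im_le_norm (w - z)
  rw [sub_re] at hre
  rw [sub_im] at him
  constructor <;> linarith [abs_sub_abs_le_abs_sub w.re z.re]

lemma differentiableAt_hypContourIntegral_zero (ht : 0 < t) (ha : a ∈ Ioo 0 (hypFirstPole t))
    {z : ℂ} (hz : t * |z.re| < 1 + t) : DifferentiableAt ℂ (hypContourIntegral t a 0) z := by
  obtain ⟨C, hC, h⟩ := exists_norm_hypContour_zero_integrand_le ht ha
  set κ : ℝ := 1 + t - t * |z.re|
  have hκ0 : 0 < κ := sub_pos.2 hz
  refine differentiableAt_hypContourIntegral_of_dominated ht ha 0 (δ := κ / (2 * t))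
    (by positivity) ((integrable_exp_neg_mul_abs (half_pos hκ0)).const_mul
      (C * Real.exp (t * a * (|z.im| + κ / (2 * t))))) fun w hw x ↦ (h x w).trans ?_
  obtain ⟨hre, him⟩ := abs_re_lt_and_abs_im_sub_lt_of_mem_ball hw
  have hre' : t * |w.re| ≤ t * |z.re| + κ / 2 :=
    (mul_le_mul_of_nonneg_left hre.le ht.le).trans_eq (by field_simp)
  have hta : 0 < t * a := mul_pos ht ha.1
  gcongr
  · linarith [abs_sub_abs_le_abs_sub w.im z.im]
  · linarith

lemma differentiableAt_hypContourIntegral_one (ht : 0 < t) (ha : a ∈ Ioo 0 (hypFirstPole t))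
    {z : ℂ} (hz : 0 < z.im) : DifferentiableAt ℂ (hypContourIntegral t a 1) z := by
  obtain ⟨C, hC, h⟩ := exists_norm_hypContour_one_integrand_le (B := |z.re| + z.im / 2) ht ha
    (half_pos hz)
  refine differentiableAt_hypContourIntegral_of_dominated ht ha 1 (half_pos hz)
    ((integrable_exp_neg_mul_abs one_pos).const_mul
      (C * Real.exp (-(t * a * (z.im / 2))))) fun w hw x ↦ ?_
  obtain ⟨hre, him⟩ := abs_re_lt_and_abs_im_sub_lt_of_mem_ball hw
  have him' : z.im / 2 ≤ w.im := by linarith [(abs_lt.1 him).1]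
  have hta : 0 < t * a := mul_pos ht ha.1
  exact (h x w hre.le him').trans (by gcongr)

lemma exists_norm_hypContourIntegral_one_le (ht : 0 < t) (ha : a ∈ Ioo 0 (hypFirstPole t))
    (B : ℝ) {v : ℝ} (hv : 0 < v) :
    ∃ C > 0, ∀ z : ℂ, |z.re| ≤ B → v ≤ z.im →
      ‖hypContourIntegral t a 1 z‖ ≤ C * Real.exp (-(t * a * z.im)) := by
  obtain ⟨C, hC, h⟩ := exists_norm_hypContour_one_integrand_le (B := B) ht ha hv
  have hint := integrable_exp_neg_mul_abs one_pos
  refine ⟨C * ∫ x : ℝ, Real.exp (-1 * |x|), mul_pos hC (integral_exp_pos hint), fun z hre him ↦ ?_⟩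
  refine (norm_integral_le_of_norm_le (hint.const_mul _)
    (.of_forall fun x ↦ h x z hre him)).trans_eq ?_
  rw [integral_const_mul]
  ring

end ContourIntegral

section ContourShift

variable {t a : ℝ} {z : ℂ}

lemma eventually_one_add_sq_mul_norm_hypKernel_le (ht : 0 < t) (hz : t * |z.re| < 1 + t) (B : ℝ)
    {ε : ℝ} (hε : 0 < ε) : ∀ᶠ x in cocompact ℝ, ∀ y : ℂ, y.re = x → -(y.im * z.im) ≤ B →
      (1 + x ^ 2) * ‖hypKernel t z y‖ ≤ ε := by
  set κ : ℝ := 1 + t - t * |z.re|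
  have hκ : 0 < κ := sub_pos.2 hz
  have hpow (n : ℕ) : Tendsto (fun x : ℝ ↦ x ^ n * Real.exp (-κ * x)) atTop (𝓝 0) := by
    simpa only [Real.rpow_natCast] using tendsto_rpow_mul_exp_neg_mul_atTop_nhds_zero n κ hκ
  have hlim : Tendsto (fun x : ℝ ↦ (1 + x ^ 2) * (16 * Real.exp (t * B) * Real.exp (-κ * |x|)))
      (cocompact ℝ) (𝓝 0) := by
    have := (((hpow 0).add (hpow 2)).const_mul (16 * Real.exp (t * B))).comp
      (tendsto_norm_cocompact_atTop (E := ℝ))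
    simp only [add_zero, mul_zero] at this
    refine this.congr fun x ↦ ?_
    simp only [Function.comp_apply, Real.norm_eq_abs, sq_abs]
    ring
  filter_upwards [hlim.eventually_le_const hε,
    (tendsto_norm_cocompact_atTop (E := ℝ)).eventually_ge_atTop (1 + t⁻¹)] with x hx hlarge y hy hB
  subst hy
  refine le_trans ?_ hx
  gcongr
  exact norm_hypKernel_le_of_le_abs_re ht hlarge hB

lemma hypContourIntegral_parabola_eq_line (ht : 0 < t) (ha : a ∈ Ioo 0 (hypFirstPole t))
    (hz : t * |z.re| < 1 + t) (him : 0 < z.im) :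
    hypContourIntegral t a 1 z = hypContourIntegral t a 0 z := by
  have hf : DifferentiableOn ℂ (hypKernel t z) {y | y.re ≠ 0 ∨ y.im ∈ Ioo 0 (hypFirstPole t)} :=
    fun y hy ↦ (differentiableAt_hypKernel ht z hy).differentiableWithinAt
  have hshift := tendsto_integral_hypContour_sub (s := 0) (u := 1) (convex_Ioo _ _) hf ha ha ?_
  · refine sub_eq_zero.1 (tendsto_nhds_unique (Tendsto.sub ?_ ?_) hshift)
    · exact intervalIntegral_tendsto_integral (integrable_hypContour_one_integrand ht ha him)
        tendsto_neg_atTop_atBot tendsto_id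
    · exact intervalIntegral_tendsto_integral (integrable_hypContour_zero_integrand ht ha hz)
        tendsto_neg_atTop_atBot tendsto_id
  · intro ε hε
    filter_upwards [eventually_one_add_sq_mul_norm_hypKernel_le ht hz 0 hε] with x hx y hy
    obtain ⟨hre, hmem⟩ := re_eq_and_im_mem_of_mem_segment_hypContour hy
    have hy0 : 0 ≤ y.im := by
      refine (le_min ?_ ?_).trans hmem.1 <;> have := ha.1 <;> positivity
    have hdist : ‖hypContour a 1 x - hypContour a 0 x‖ = x ^ 2 := by
      have : hypContour a 1 x - hypContour a 0 x = ((x ^ 2 : ℝ) : ℂ) * I := by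
        simp only [hypContour, ofReal_one, ofReal_zero, ofReal_pow]
        ring
      rw [this, norm_mul, norm_I, mul_one, norm_real, Real.norm_of_nonneg (sq_nonneg x)]
    rw [hdist, mul_comm]
    exact (mul_le_mul_of_nonneg_right (by linarith) (norm_nonneg _)).trans
      (hx y hre (neg_nonpos.2 (mul_nonneg hy0 him.le)))

end ContourShift

/-! ### The integral representation -/

lemma hypInt_neg_left (τ : ℝ) (z : ℂ) (y : ℝ) : hypInt (-τ) z y = hypInt τ z y := by
  simp only [hypInt, ofReal_neg, neg_mul, Complex.sinh_neg, mul_neg, neg_div_neg_eq]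

lemma hypInt_neg (τ : ℝ) (z : ℂ) (y : ℝ) : hypInt τ (-z) y = -hypInt τ z y := by
  simp only [hypInt, mul_neg, Complex.sinh_neg]
  ring

lemma hypGammaArg_neg_left (τ : ℝ) (z : ℂ) : hypGammaArg (-τ) z = hypGammaArg τ z := by
  simp only [hypGammaArg, hypInt_neg_left]

lemma hypGammaArg_neg (τ : ℝ) (z : ℂ) : hypGammaArg τ (-z) = -hypGammaArg τ z := by
  simp only [hypGammaArg, hypInt_neg, integral_neg, mul_neg]

lemma hypInt_eq_sub_hypKernel (t : ℝ) (z : ℂ) (y : ℝ) :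
    hypInt t z y = z / y ^ 2 - (hypKernel t z y + hypKernel t z (-y)) / 2 := by
  have hsinh : sinh (t * y * z) = (exp (t * y * z) - exp (-(t * y * z))) / 2 := rfl
  simp only [hypInt, hypKernel, hsinh, mul_neg, neg_mul, Complex.sinh_neg, neg_neg, div_eq_mul_inv,
    mul_inv, inv_neg]
  ring

lemma hypPrincipalPart_add_neg (t : ℝ) (z y : ℂ) :
    hypPrincipalPart t z y + hypPrincipalPart t z (-y) = 2 * (z / y ^ 2) := by
  simp only [hypPrincipalPart, Odd.neg_pow (by decide : Odd 3), neg_sq, div_neg]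
  ring

lemma tendsto_hypPrincipalPart_cobounded (t : ℝ) (z : ℂ) :
    Tendsto (hypPrincipalPart t z) (Bornology.cobounded ℂ) (𝓝 0) := by
  have hinv := tendsto_inv₀_cobounded (α := ℂ)
  have := (((hinv.pow 3).const_mul (t : ℂ)⁻¹).add ((hinv.pow 2).const_mul z)).add
    (hinv.const_mul (hypResidue t z))
  simp only [mul_zero, add_zero, ne_eq, OfNat.ofNat_ne_zero, not_false_eq_true, zero_pow] at this
  exact this.congr fun y ↦ by simp only [hypPrincipalPart, div_eq_mul_inv, inv_pow]

lemma comap_re_cocompact_le_cobounded : comap re (cocompact ℝ) ≤ Bornology.cobounded ℂ := by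
  rw [← comap_norm_atTop, ← Filter.tendsto_iff_comap]
  exact tendsto_atTop_mono abs_re_le_norm (tendsto_norm_cocompact_atTop.comp tendsto_comap)

section Representation

variable {t : ℝ} {z : ℂ} {W : ℂ → ℂ}

lemma norm_hypInt_le (ht : 0 < t) (z : ℂ) {y : ℝ} (hy : 1 + t⁻¹ ≤ |y|) :
    ‖hypInt t z y‖ ≤ ‖z‖ / y ^ 2 + 16 * Real.exp (-(1 + t - t * |z.re|) * |y|) := by
  have h1 := norm_hypKernel_le_of_le_abs_re (z := z) (y := y) (B := 0) ht (by simpa) (by simp)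
  have h2 := norm_hypKernel_le_of_le_abs_re (z := z) (y := -y) (B := 0) ht (by simpa) (by simp)
  simp only [mul_zero, Real.exp_zero, mul_one, ofReal_re, neg_re, abs_neg] at h1 h2
  rw [hypInt_eq_sub_hypKernel]
  refine (norm_sub_le _ _).trans (add_le_add (by simp) ?_)
  rw [norm_div, norm_ofNat]
  linarith [norm_add_le (hypKernel t z y) (hypKernel t z (-y))]

lemma hypInt_eq_neg_add_div_two
    (hWK : ∀ y ∈ hypPoleFree t, W y = hypKernel t z y - hypPrincipalPart t z y) {y : ℝ}
    (hy : y ≠ 0) : hypInt t z y = -(W y + W (-y)) / 2 := by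
  rw [hWK y (.inl (by simpa)), hWK (-y) (.inl (by simpa)), hypInt_eq_sub_hypKernel]
  linear_combination (-1 / 2) * hypPrincipalPart_add_neg t z y

lemma continuous_regularPart_ofReal (hW : DifferentiableOn ℂ W
    {y | y.re ≠ 0 ∨ y.im ∈ Ico 0 (hypFirstPole t)}) : Continuous fun x : ℝ ↦ W x :=
  hW.continuousOn.comp_continuous continuous_ofReal
    fun x ↦ .inr (by simpa using hypFirstPole_pos t)

lemma integrableOn_hypInt (ht : 0 < t) (hz : t * |z.re| < 1 + t) :
    IntegrableOn (hypInt t z) (Ioi 0) := by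
  obtain ⟨W, hW, hWK⟩ := exists_differentiableOn_eq_hypKernel_sub ht z
  have hc : Continuous fun y : ℝ ↦ -(W y + W (-y)) / 2 := by
    have hWc := continuous_regularPart_ofReal hW
    have := hWc.comp continuous_neg
    simp only [Function.comp_def, ofReal_neg] at this
    exact (hWc.add this).neg.div_const 2
  have heq : EqOn (fun y : ℝ ↦ -(W y + W (-y)) / 2) (hypInt t z) (Ioi 0) :=
    fun y hy ↦ (hypInt_eq_neg_add_div_two hWK (ne_of_gt hy)).symm
  have ht' : 0 < 1 + t⁻¹ := by positivity
  rw [← Ioc_union_Ioi_eq_Ioi ht'.le]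
  refine IntegrableOn.union ?_ ?_
  · exact (hc.integrableOn_Ioc).congr_fun (heq.mono Ioc_subset_Ioi_self) measurableSet_Ioc
  · have hsq : IntegrableOn (fun y : ℝ ↦ ‖z‖ / y ^ 2) (Ioi (1 + t⁻¹)) := by
      refine IntegrableOn.congr_fun ((integrableOn_Ioi_rpow_of_lt (a := -2) (by norm_num)
        ht').const_mul ‖z‖) (fun y hy ↦ ?_) measurableSet_Ioi
      rw [Real.rpow_neg (ht'.trans hy).le, Real.rpow_two, div_eq_mul_inv]
    refine Integrable.mono' (hsq.add
      ((integrable_exp_neg_mul_abs (sub_pos.2 hz)).const_mul 16).integrableOn) ?_ ?_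
    · exact (hc.continuousOn.congr (heq.mono (Ioi_subset_Ioi ht'.le)).symm).aestronglyMeasurable
        measurableSet_Ioi
    · filter_upwards [ae_restrict_mem measurableSet_Ioi] with y hy
      exact norm_hypInt_le ht z ((le_of_lt hy).trans (le_abs_self y))

lemma tendsto_integral_regularPart_real (hz : IntegrableOn (hypInt t z) (Ioi 0))
    (hWc : Continuous fun x : ℝ ↦ W x)
    (hWK : ∀ y ∈ hypPoleFree t, W y = hypKernel t z y - hypPrincipalPart t z y) :
    Tendsto (fun X : ℝ ↦ ∫ x in -X..X, W x) atTop (𝓝 (-2 * ∫ y in Ioi 0, hypInt t z y)) := by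
  refine ((intervalIntegral_tendsto_integral_Ioi 0 hz tendsto_id).const_mul (-2)).congr'
    (.of_forall fun X ↦ ?_)
  have hneg : Continuous fun x : ℝ ↦ W ((-x : ℝ) : ℂ) := hWc.comp continuous_neg
  have hreflect : ∫ x in -X..0, W x = ∫ x in 0..X, W ((-x : ℝ) : ℂ) := by
    simpa using (intervalIntegral.integral_comp_neg (a := 0) (b := X) fun x : ℝ ↦ W x).symm
  have hae : ∀ᵐ y : ℝ, y ∈ Ι 0 X → -2 * hypInt t z y = W ((-y : ℝ) : ℂ) + W y := by
    filter_upwards [Measure.ae_ne volume (0 : ℝ)] with y hy _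
    rw [hypInt_eq_neg_add_div_two hWK hy, ofReal_neg]
    ring
  rw [id, ← intervalIntegral.integral_const_mul, intervalIntegral.integral_congr_ae hae,
    intervalIntegral.integral_add (hneg.intervalIntegrable _ _) (hWc.intervalIntegrable _ _),
    ← hreflect, intervalIntegral.integral_add_adjacent_intervals (hWc.intervalIntegrable _ _)
      (hWc.intervalIntegrable _ _)]


lemma tendsto_integral_regularPart_horizontal (ht : 0 < t) {a : ℝ} (ha : a ∈ Ioo 0 (hypFirstPole t))
    (hz : t * |z.re| < 1 + t)
    (hWK : ∀ y ∈ hypPoleFree t, W y = hypKernel t z y - hypPrincipalPart t z y) :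
    Tendsto (fun X : ℝ ↦ ∫ x in -X..X, W (hypContour a 0 x) * (1 + 2 * (0 : ℝ) * x * I)) atTop
      (𝓝 (hypContourIntegral t a 0 z + π * I * hypResidue t z)) := by
  have hK := intervalIntegral_tendsto_integral (integrable_hypContour_zero_integrand ht ha hz)
    tendsto_neg_atTop_atBot tendsto_id
  have hPP := tendsto_integral_principalPart ha.1 (t : ℂ)⁻¹ z (hypResidue t z)
  rw [← sub_neg_eq_add]
  refine (hK.sub hPP).congr fun X ↦ ?_
  have hne (x : ℝ) : hypContour a 0 x ≠ 0 :=
    ne_zero_of_mem_hypPoleFree (hypContour_mem_hypPoleFree ha 0 x)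
  have hPPc : Continuous fun x : ℝ ↦ ((t : ℂ)⁻¹ / hypContour a 0 x ^ 3 +
      z / hypContour a 0 x ^ 2 + hypResidue t z / hypContour a 0 x) *
        (1 + 2 * (0 : ℝ) * x * I) := by
    simp only [div_eq_mul_inv, ← inv_pow]
    fun_prop (disch := exact hne)
  rw [id, ← intervalIntegral.integral_sub
    ((continuous_hypContour_integrand ht ha 0 z).intervalIntegrable _ _)
    (hPPc.intervalIntegrable _ _)]
  simp only [hWK _ (hypContour_mem_hypPoleFree ha 0 _), hypPrincipalPart, sub_mul]

lemma eventually_norm_regularPart_le (ht : 0 < t) (hz : t * |z.re| < 1 + t)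
    (hWK : ∀ y ∈ hypPoleFree t, W y = hypKernel t z y - hypPrincipalPart t z y) (B : ℝ) {ε : ℝ}
    (hε : 0 < ε) : ∀ᶠ x in cocompact ℝ, ∀ y : ℂ, y.re = x → -(y.im * z.im) ≤ B → ‖W y‖ ≤ ε := by
  have hPP := eventually_comap.1 (((tendsto_hypPrincipalPart_cobounded t z).norm.mono_left
    comap_re_cocompact_le_cobounded).eventually_le_const (norm_zero.trans_lt (half_pos hε)))
  filter_upwards [eventually_one_add_sq_mul_norm_hypKernel_le ht hz B (half_pos hε), hPP,
    (tendsto_norm_cocompact_atTop (E := ℝ)).eventually_gt_atTop 0] with x hx hPPx hx0 y hy hB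
  rw [hWK y (.inl (hy ▸ norm_pos_iff.1 hx0))]
  refine (norm_sub_le _ _).trans ?_
  have : ‖hypKernel t z y‖ ≤ (1 + x ^ 2) * ‖hypKernel t z y‖ :=
    le_mul_of_one_le_left (norm_nonneg _) (by linarith [sq_nonneg x])
  linarith [hx y hy hB, hPPx y hy]

/-- The line is moved off the real axis after subtracting the principal part, whose own integral
over `Im y = a` is `-πi` times the residue. -/
lemma hypGammaArg_eq_hypContourIntegral (ht : 0 < t) {a : ℝ} (ha : a ∈ Ioo 0 (hypFirstPole t))
    (hz : t * |z.re| < 1 + t) :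
    hypGammaArg t z = I / 4 * (hypContourIntegral t a 0 z + π * I * hypResidue t z) := by
  obtain ⟨W, hW, hWK⟩ := exists_differentiableOn_eq_hypKernel_sub ht z
  have hreal := tendsto_integral_regularPart_real (integrableOn_hypInt ht hz)
    (continuous_regularPart_ofReal hW) hWK
  have hline := tendsto_integral_regularPart_horizontal ht ha hz hWK
  have hshift := tendsto_integral_hypContour_sub (a := 0) (s := 0) (u := 0) (convex_Ico _ _) hW
    ⟨le_rfl, hypFirstPole_pos t⟩ (Ioo_subset_Ico_self ha) fun ε hε ↦ ?_
  · simp only [hypContour_horizontal, ofReal_zero, mul_zero, zero_mul, add_zero, mul_one]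
      at hline hshift
    have hval := sub_eq_zero.1 (tendsto_nhds_unique (hline.sub hreal) hshift)
    rw [hypGammaArg, hval, mul_inv, inv_I]
    ring
  · have ha0 := ha.1
    filter_upwards [eventually_norm_regularPart_le ht hz hWK (a * |z.im|) (div_pos hε ha0)]
      with x hx y hy
    obtain ⟨hre, him⟩ := re_eq_and_im_mem_of_mem_segment_hypContour hy
    have hdist : ‖hypContour a 0 x - hypContour 0 0 x‖ = a := by
      simp [hypContour, abs_of_pos ha0]
    rw [hdist, ← le_div_iff₀ ha0]
    refine hx y hre ?_
    simp only [zero_mul, add_zero, uIcc_of_le ha0.le] at him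
    calc -(y.im * z.im) ≤ |y.im * z.im| := neg_le_abs _
      _ = y.im * |z.im| := by rw [abs_mul, abs_of_nonneg him.1]
      _ ≤ a * |z.im| := by gcongr; exact him.2

end Representation

/-! ### The continuation -/

/-- The expression of `γ_τ`, `τ = -t`, as an integral over the parabola `x ↦ x + i(a + x²)`. It
makes sense on the whole upper half-plane. -/
def hypUpperGamma (t a : ℝ) (z : ℂ) : ℂ :=
  I / 4 * (hypContourIntegral t a 1 z + π * I * hypResidue t z)

/-- The continuation of `γ_τ`, `τ = -t`, to the cut plane; in the lower half-plane it is obtained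
by oddness. The height `hypFirstPole t / 2` of the parabola is immaterial. -/
def hypGammaExt (t : ℝ) (z : ℂ) : ℂ :=
  if 0 < z.im then hypUpperGamma t (hypFirstPole t / 2) z
  else if z.im < 0 then -hypUpperGamma t (hypFirstPole t / 2) (-z)
  else hypGammaArg t z

section Continuation

variable {t a b : ℝ} {z : ℂ}

lemma half_hypFirstPole_mem (t : ℝ) : hypFirstPole t / 2 ∈ Ioo 0 (hypFirstPole t) :=
  ⟨half_pos (hypFirstPole_pos t), half_lt_self (hypFirstPole_pos t)⟩

lemma differentiable_hypResidue (t : ℝ) : Differentiable ℂ (hypResidue t) := by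
  unfold hypResidue; fun_prop

lemma isOpen_strip (t : ℝ) : IsOpen {z : ℂ | t * |z.re| < 1 + t} :=
  isOpen_lt (by fun_prop) continuous_const

lemma analyticOnNhd_hypUpperGamma (ht : 0 < t) (ha : a ∈ Ioo 0 (hypFirstPole t)) :
    AnalyticOnNhd ℂ (hypUpperGamma t a) {z | 0 < z.im} := by
  refine DifferentiableOn.analyticOnNhd (fun z hz ↦ ?_) (isOpen_lt continuous_const continuous_im)
  exact (((differentiableAt_hypContourIntegral_one ht ha hz).add
    ((differentiable_hypResidue t z).const_mul _)).const_mul _).differentiableWithinAt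

lemma analyticOnNhd_hypGammaArg (ht : 0 < t) :
    AnalyticOnNhd ℂ (hypGammaArg t) {z | t * |z.re| < 1 + t} := by
  have ha := half_hypFirstPole_mem t
  refine DifferentiableOn.analyticOnNhd (.congr (fun z hz ↦ ?_)
    fun z hz ↦ hypGammaArg_eq_hypContourIntegral ht ha hz) (isOpen_strip t)
  exact (((differentiableAt_hypContourIntegral_zero ht ha hz).add
    ((differentiable_hypResidue t z).const_mul _)).const_mul _).differentiableWithinAt

lemma hypUpperGamma_eq_hypGammaArg (ht : 0 < t) (ha : a ∈ Ioo 0 (hypFirstPole t))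
    (hz : t * |z.re| < 1 + t) (him : 0 < z.im) : hypUpperGamma t a z = hypGammaArg t z := by
  rw [hypUpperGamma, hypContourIntegral_parabola_eq_line ht ha hz him,
    hypGammaArg_eq_hypContourIntegral ht ha hz]

lemma eqOn_hypUpperGamma (ht : 0 < t) (ha : a ∈ Ioo 0 (hypFirstPole t))
    (hb : b ∈ Ioo 0 (hypFirstPole t)) :
    EqOn (hypUpperGamma t a) (hypUpperGamma t b) {z | 0 < z.im} := by
  have hI : I ∈ {z : ℂ | 0 < z.im} := by simp
  refine (analyticOnNhd_hypUpperGamma ht ha).eqOn_of_preconnected_of_eventuallyEq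
    (analyticOnNhd_hypUpperGamma ht hb) (convex_halfSpace_im_gt 0).isPreconnected hI ?_
  have hI' : t * |I.re| < 1 + t := by rw [I_re, abs_zero, mul_zero]; positivity
  filter_upwards [(isOpen_strip t).mem_nhds hI',
    (isOpen_lt continuous_const continuous_im).mem_nhds hI] with z hz him
  rw [hypUpperGamma_eq_hypGammaArg ht ha hz him, hypUpperGamma_eq_hypGammaArg ht hb hz him]

lemma hypGammaExt_of_im_pos (ht : 0 < t) (ha : a ∈ Ioo 0 (hypFirstPole t)) (hz : 0 < z.im) :
    hypGammaExt t z = hypUpperGamma t a z := by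
  rw [hypGammaExt, if_pos hz, eqOn_hypUpperGamma ht (half_hypFirstPole_mem t) ha hz]

lemma hypGammaExt_neg (hz : z.im < 0) : hypGammaExt t (-z) = -hypGammaExt t z := by
  simp [hypGammaExt, hz, hz.not_gt]

lemma hypGammaExt_eq_hypGammaArg (ht : 0 < t) (hz : t * |z.re| < 1 + t) :
    hypGammaExt t z = hypGammaArg t z := by
  have ha := half_hypFirstPole_mem t
  rcases lt_trichotomy z.im 0 with him | him | him
  · rw [← neg_inj, ← hypGammaExt_neg him, ← hypGammaArg_neg,
      hypGammaExt_of_im_pos ht ha (by simpa), hypUpperGamma_eq_hypGammaArg ht ha (by simpa)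
        (by simpa)]
  · simp [hypGammaExt, him]
  · rw [hypGammaExt_of_im_pos ht ha him, hypUpperGamma_eq_hypGammaArg ht ha hz him]

lemma analyticAt_hypGammaExt_of_im_pos (ht : 0 < t) (hz : 0 < z.im) :
    AnalyticAt ℂ (hypGammaExt t) z := by
  have ha := half_hypFirstPole_mem t
  refine (analyticOnNhd_hypUpperGamma ht ha z hz).congr ?_
  filter_upwards [(isOpen_lt continuous_const continuous_im).mem_nhds hz] with w hw
  exact (hypGammaExt_of_im_pos ht ha hw).symm

lemma analyticAt_hypGammaExt (ht : 0 < t) (hz : t * |z.re| < 1 + t ∨ z.im ≠ 0) :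
    AnalyticAt ℂ (hypGammaExt t) z := by
  rcases hz with hz | hz
  · refine (analyticOnNhd_hypGammaArg ht z hz).congr ?_
    filter_upwards [(isOpen_strip t).mem_nhds hz] with w hw
    exact (hypGammaExt_eq_hypGammaArg ht hw).symm
  · rcases hz.lt_or_gt with him | him
    · have hcomp : AnalyticAt ℂ (fun w ↦ -hypGammaExt t (-w)) z :=
        ((analyticAt_hypGammaExt_of_im_pos ht (by simpa)).fun_comp analyticAt_id.neg).neg
      refine hcomp.congr ?_
      filter_upwards [(isOpen_lt continuous_im continuous_const).mem_nhds him] with w hw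
      simp [hypGammaExt_neg hw]
    · exact analyticAt_hypGammaExt_of_im_pos ht him

/-- The decay rate `t a` comes close to `t * hypFirstPole t = π / max 1 t⁻¹` as the vertex of the
parabola approaches the first pole. -/
lemma exists_norm_hypGammaExt_add_le (ht : 0 < t) (B : ℝ) {ε : ℝ} (hε : 0 < ε) :
    ∃ C : ℝ, ∀ z : ℂ, |z.re| ≤ B → 1 ≤ z.im → ‖hypGammaExt t z + π / 4 * hypResidue t z‖ ≤
      C * Real.exp ((ε - π / max 1 t⁻¹) * z.im) := by
  obtain ⟨a, ha, hat⟩ := exists_between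
    (max_lt (hypFirstPole_pos t) (sub_lt_self _ (div_pos hε ht)))
  obtain ⟨ha0, haε⟩ := max_lt_iff.1 ha
  obtain ⟨C, hC, h⟩ := exists_norm_hypContourIntegral_one_le ht ⟨ha0, hat⟩ B one_pos
  have hrate : π / max 1 t⁻¹ - ε ≤ t * a := by
    rw [← mul_hypFirstPole ht, ← mul_div_cancel₀ ε ht.ne', ← mul_sub]
    exact mul_le_mul_of_nonneg_left haε.le ht.le
  refine ⟨C / 4, fun z hre him ↦ ?_⟩
  have him0 : 0 < z.im := one_pos.trans_le him
  have hext : hypGammaExt t z + π / 4 * hypResidue t z = I / 4 * hypContourIntegral t a 1 z := by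
    rw [hypGammaExt_of_im_pos ht ⟨ha0, hat⟩ him0, hypUpperGamma]
    linear_combination π / 4 * hypResidue t z * I_sq
  calc ‖hypGammaExt t z + π / 4 * hypResidue t z‖
      = ‖hypContourIntegral t a 1 z‖ / 4 := by
        rw [hext, norm_mul, norm_div, norm_I, norm_ofNat, one_div_mul_eq_div]
    _ ≤ C / 4 * Real.exp (-(t * a * z.im)) := by linarith [h z hre him]
    _ ≤ C / 4 * Real.exp ((ε - π / max 1 t⁻¹) * z.im) := by
        gcongr
        nlinarith

lemma mul_abs_lt_one_add_iff (ht : 0 < t) (x : ℝ) : t * |x| < 1 + t ↔ |x| < 1 - (-t)⁻¹ := by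
  have hw : t * (1 - (-t)⁻¹) = 1 + t := by field_simp; ring
  rw [← hw, mul_lt_mul_iff_right₀ ht]

lemma mul_abs_re_lt_or_im_ne_zero_of_mem_hypCutPlane (ht : 0 < t) (hz : z ∈ hypCutPlane (-t)) :
    t * |z.re| < 1 + t ∨ z.im ≠ 0 := by
  refine or_iff_not_imp_right.2 fun him ↦ (mul_abs_lt_one_add_iff ht _).2 ?_
  obtain ⟨h1, h2⟩ := not_or.1 (not_and.1 hz (not_not.1 him))
  exact abs_lt.2 ⟨by linarith, not_le.1 h2⟩

lemma pi_div_four_mul_hypResidue (t : ℝ) (z : ℂ) : π / 4 * hypResidue t z =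
    -(π * (-t : ℝ) * z ^ 2 / 8 - π / 24 * ((-t : ℝ) + ((-t : ℝ) : ℂ)⁻¹)) := by
  simp only [hypResidue, ofReal_neg, inv_neg]
  ring

end Continuation

/-- `γ_τ` has an analytic continuation to the cut plane, with the asymptotics
`|∓γ_τ(z) + πτz²/8 − (π/24)(τ+τ⁻¹)| = O(exp((ε − π/r)|Im z|))` as `Im z → ±∞`,
uniformly for `Re z` in compact subsets of `ℝ`, where `r = max(1, −τ⁻¹)`. -/
theorem hyperbolic_gamma_asymptotics (τ : ℝ) (hτ : τ < 0) :
    ∃ γc : ℂ → ℂ,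
      (∀ z : ℂ, |z.re| < 1 - τ⁻¹ → γc z = hypGammaArg τ z) ∧
      AnalyticOnNhd ℂ γc (hypCutPlane τ) ∧
      (∀ ε : ℝ, 0 < ε → ∀ K : Set ℝ, IsCompact K →
        ∃ C M : ℝ, 0 < M ∧ ∀ z : ℂ, z.re ∈ K →
          ((M ≤ z.im →
            ‖-γc z + (Real.pi : ℂ) * (τ : ℂ) * z ^ 2 / 8 -
                ((Real.pi : ℂ) / 24) * ((τ : ℂ) + ((τ : ℂ))⁻¹)‖ ≤
              C * Real.exp ((ε - Real.pi / max 1 (-τ⁻¹)) * |z.im|)) ∧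
          (z.im ≤ -M →
            ‖γc z + (Real.pi : ℂ) * (τ : ℂ) * z ^ 2 / 8 -
                ((Real.pi : ℂ) / 24) * ((τ : ℂ) + ((τ : ℂ))⁻¹)‖ ≤
              C * Real.exp ((ε - Real.pi / max 1 (-τ⁻¹)) * |z.im|)))) := by
  obtain ⟨t, rfl⟩ : ∃ t : ℝ, τ = -t := ⟨-τ, (neg_neg τ).symm⟩
  have ht : 0 < t := neg_lt_zero.1 hτ
  refine ⟨hypGammaExt t, fun z hz ↦ ?_, fun z hz ↦ analyticAt_hypGammaExt ht
    (mul_abs_re_lt_or_im_ne_zero_of_mem_hypCutPlane ht hz), fun ε hε K hK ↦ ?_⟩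
  · rw [hypGammaArg_neg_left, hypGammaExt_eq_hypGammaArg ht ((mul_abs_lt_one_add_iff ht _).2 hz)]
  · obtain ⟨B, hB⟩ := hK.isBounded.exists_norm_le
    obtain ⟨C, hC⟩ := exists_norm_hypGammaExt_add_le ht B hε
    refine ⟨C, 1, one_pos, fun z hz ↦ ⟨fun him ↦ ?_, fun him ↦ ?_⟩⟩ <;>
      rw [inv_neg (a := t), neg_neg, add_sub_assoc, ← neg_neg (_ - _), ← pi_div_four_mul_hypResidue]
    · rw [abs_of_nonneg (by linarith), ← neg_add, norm_neg]
      exact hC z (hB _ hz) him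
    · have := hC (-z) (by simpa using hB _ hz) (by simpa using le_neg.1 him)
      rw [hypGammaExt_neg (by linarith)] at this
      rw [abs_of_nonpos (by linarith), ← norm_neg, neg_add, neg_neg]
      simpa [hypResidue] using this
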